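/- Let m : [0,1] → ℝ be continuous and let φ : [0,∞) → ℝ be continuous with the following properties: φ is constant on [1,∞); φ is continuously differentiable on (0,1] (in particular the left-hand derivative φ'(1⁻) exists); φ is twice continuously differentiable on (0,1) with φ''(u) = 2 m(u) φ(u) for all u ∈ (0,1); and for every smooth compactly supported test function g : ℝ → ℝ with support contained in (0,∞), one has (1/2)∫_0^∞ φ(u) g''(u) du = ∫_0^1 m(u) φ(u) g(u) du. Then the left-hand derivative of φ at u = 1 is zero: φ'(1⁻) = 0. -/

import Mathlib

open MeasureTheory Real

/-!
Test the distributional equation against a smooth bump `g` supported in `[1/2, 3/2]` with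
`g 1 = 1`. On `[1/4, 1]` the function `φ g' - φ' g` is an antiderivative of
`φ g'' - 2 m φ g` (Green's identity together with the equation for `φ`), and on `[1, 2]`,
where `φ = φ 1`, the function `φ 1 * g'` is an antiderivative of `φ g''`. The boundary terms
`φ 1 * g' 1` cancel, leaving `∫ φ g'' = 2 ∫ m φ g - φ' 1`. Comparison with the distributional
equation gives `φ' 1 = 0`.
-/

/-- Lemma B.2: a distributional solution of `φ'' = 2 m 1_{[0,1]} φ` on `(0,∞)`
which is constant on `[1,∞)`, `C¹` on `(0,1]` and `C²` on `(0,1)` satisfies the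
Neumann boundary condition `φ'(1⁻) = 0`. -/
theorem left_deriv_at_one_eq_zero
    (m : ℝ → ℝ) (hm : ContinuousOn m (Set.Icc 0 1))
    (φ φ' φ'' : ℝ → ℝ)
    (hφcont : ContinuousOn φ (Set.Ici 0))
    (hφconst : ∀ u : ℝ, 1 ≤ u → φ u = φ 1)
    -- φ is continuously differentiable on (0,1], with one-sided (left) derivative at 1
    (hφ' : ∀ u ∈ Set.Ioc (0:ℝ) 1, HasDerivWithinAt φ (φ' u) (Set.Ioc 0 1) u)
    (hφ'cont : ContinuousOn φ' (Set.Ioc 0 1))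
    -- φ is twice continuously differentiable on (0,1) with φ'' = 2 m φ there
    (hφ'' : ∀ u ∈ Set.Ioo (0:ℝ) 1, HasDerivAt φ' (φ'' u) u)
    (hφ''cont : ContinuousOn φ'' (Set.Ioo 0 1))
    (hODE : ∀ u ∈ Set.Ioo (0:ℝ) 1, φ'' u = 2 * m u * φ u)
    -- the distributional equation tested against smooth test functions supported in (0,∞)
    (hweak : ∀ g : ℝ → ℝ, ContDiff ℝ (⊤ : ℕ∞) g → HasCompactSupport g →
      tsupport g ⊆ Set.Ioi 0 →
      (1 / 2) * (∫ u in Set.Ioi (0:ℝ), φ u * deriv (deriv g) u)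
        = ∫ u in (0:ℝ)..1, m u * φ u * g u) :
    φ' 1 = 0 := by
  obtain ⟨g, hg, hgc, hgs, hg1⟩ : ∃ g : ℝ → ℝ, ContDiff ℝ (⊤ : ℕ∞) g ∧ HasCompactSupport g ∧
      tsupport g = Set.Icc (1 / 2) (3 / 2) ∧ g 1 = 1 := by
    let f : ContDiffBump (1 : ℝ) := ⟨1 / 4, 1 / 2, by norm_num, by norm_num⟩
    refine ⟨f, f.contDiff, f.hasCompactSupport, ?_, f.one_of_mem_closedBall ?_⟩
    · rw [f.tsupport_eq, Real.closedBall_eq_Icc]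
      norm_num [f]
    · simp [f]
  have hw := hweak g hg hgc (by
    rw [hgs]
    intro x hx
    exact lt_of_lt_of_le (by norm_num) hx.1)
  have hgi : ContDiff ℝ 2 g := contDiff_infty.1 hg 2
  have hdg : ContDiff ℝ 1 (deriv g) := ContDiff.deriv' (n := 1) (by norm_num; exact hgi)
  have hddg : Continuous (deriv (deriv g)) := hdg.continuous_deriv le_rfl
  have hD1 (u : ℝ) : HasDerivAt g (deriv g u) u :=
    (hgi.differentiable (by norm_num) u).hasDerivAt
  have hD2 (u : ℝ) : HasDerivAt (deriv g) (deriv (deriv g) u) u :=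
    (hdg.differentiable (by norm_num) u).hasDerivAt
  have z0 (u : ℝ) (hu : u ∉ Set.Icc (1 / 2 : ℝ) (3 / 2)) : g u = 0 :=
    image_eq_zero_of_notMem_tsupport (hgs ▸ hu)
  have z1 (u : ℝ) (hu : u ∉ Set.Icc (1 / 2 : ℝ) (3 / 2)) : deriv g u = 0 :=
    image_eq_zero_of_notMem_tsupport fun h => hu (hgs ▸ tsupport_deriv_subset h)
  have z2 (u : ℝ) (hu : u ∉ Set.Icc (1 / 2 : ℝ) (3 / 2)) : deriv (deriv g) u = 0 :=
    image_eq_zero_of_notMem_tsupport fun h =>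
      hu (hgs ▸ tsupport_deriv_subset (tsupport_deriv_subset h))
  have hc2 : ContinuousOn (fun u => φ u * deriv (deriv g) u) (Set.Ici 0) :=
    hφcont.mul hddg.continuousOn
  have hcm : ContinuousOn (fun u => m u * φ u * g u) (Set.Icc 0 1) :=
    (hm.mul (hφcont.mono Set.Icc_subset_Ici_self)).mul hgi.continuous.continuousOn
  have hi2 (a b : ℝ) (ha : 0 ≤ a) (hab : a ≤ b) :
      IntervalIntegrable (fun u => φ u * deriv (deriv g) u) volume a b :=
    (hc2.mono fun x hx => ha.trans hx.1).intervalIntegrable_of_Icc hab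
  have him (a b : ℝ) (ha : 0 ≤ a) (hab : a ≤ b) (hb : b ≤ 1) :
      IntervalIntegrable (fun u => m u * φ u * g u) volume a b :=
    (hcm.mono (Set.Icc_subset_Icc ha hb)).intervalIntegrable_of_Icc hab
  -- The endpoints `1 / 4` and `2` lie outside the support of `g`, so all boundary terms
  -- there vanish; `1 / 4 > 0` also avoids `0`, where `φ'` need not be bounded.
  have hL : ∫ u in Set.Ioi (0:ℝ), φ u * deriv (deriv g) u
      = (∫ u in (1 / 4 : ℝ)..1, φ u * deriv (deriv g) u)
        + ∫ u in (1 : ℝ)..2, φ u * deriv (deriv g) u := by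
    rw [intervalIntegral.integral_add_adjacent_intervals
      (hi2 _ _ (by norm_num) (by norm_num)) (hi2 _ _ (by norm_num) (by norm_num)),
      intervalIntegral.integral_of_le (by norm_num)]
    refine setIntegral_eq_of_subset_of_forall_sdiff_eq_zero measurableSet_Ioi ?_ ?_
    · intro x hx
      exact lt_trans (by norm_num) hx.1
    · rintro x ⟨-, hx⟩
      rw [z2 x fun h => hx ⟨by linarith [h.1], by linarith [h.2]⟩, mul_zero]
  have hR : ∫ u in (0:ℝ)..1, m u * φ u * g u = ∫ u in (1 / 4 : ℝ)..1, m u * φ u * g u := by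
    rw [← intervalIntegral.integral_add_adjacent_intervals (b := 1 / 4)
      (him _ _ (by norm_num) (by norm_num) (by norm_num))
      (him _ _ (by norm_num) (by norm_num) (by norm_num)), add_eq_right]
    refine (intervalIntegral.integral_congr (g := fun _ => (0 : ℝ)) fun x hx => ?_).trans
      (by simp)
    rw [Set.uIcc_of_le (by norm_num)] at hx
    have : g x = 0 := z0 x fun h => by linarith [h.1, hx.2]
    simp [this]
  have hB : ∫ u in (1 : ℝ)..2, φ u * deriv (deriv g) u = -(φ 1 * deriv g 1) := by
    rw [intervalIntegral.integral_congr (g := fun u => φ 1 * deriv (deriv g) u) fun x hx => by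
        rw [Set.uIcc_of_le (by norm_num)] at hx
        simp only [hφconst x hx.1],
      intervalIntegral.integral_const_mul,
      intervalIntegral.integral_eq_sub_of_hasDerivAt (fun x _ => hD2 x)
        (hddg.intervalIntegrable _ _), z1 2 (by norm_num)]
    ring
  have hA : ∫ u in (1 / 4 : ℝ)..1, (φ u * deriv (deriv g) u - 2 * (m u * φ u * g u))
      = φ 1 * deriv g 1 - φ' 1 := by
    have hsub : Set.Icc (1 / 4 : ℝ) 1 ⊆ Set.Ioc 0 1 := fun x hx =>
      ⟨lt_of_lt_of_le (by norm_num) hx.1, hx.2⟩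
    have hcF : ContinuousOn (fun u => φ u * deriv g u - φ' u * g u) (Set.Icc (1 / 4) 1) :=
      ((hφcont.mono fun x hx => (hsub hx).1.le).mul hdg.continuous.continuousOn).sub
        ((hφ'cont.mono hsub).mul hgi.continuous.continuousOn)
    have := intervalIntegral.integral_eq_sub_of_hasDerivAt_of_le (by norm_num) hcF
      (f' := fun u => φ u * deriv (deriv g) u - 2 * (m u * φ u * g u))
      (fun u hu => by
        have hu' : u ∈ Set.Ioo (0 : ℝ) 1 := ⟨lt_trans (by norm_num) hu.1, hu.2⟩
        have h1 : HasDerivAt φ (φ' u) u :=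
          (hφ' u ⟨hu'.1, hu'.2.le⟩).hasDerivAt (Ioc_mem_nhds hu'.1 hu'.2)
        have h := (h1.mul (hD2 u)).sub ((hφ'' u hu').mul (hD1 u))
        rw [hODE u hu'] at h
        exact h.congr_deriv (by ring))
      ((hi2 _ _ (by norm_num) (by norm_num)).sub
        ((him _ _ (by norm_num) (by norm_num) le_rfl).const_mul 2))
    rw [this, z0 (1 / 4) (by norm_num), z1 (1 / 4) (by norm_num), hg1]
    ring
  rw [intervalIntegral.integral_sub (hi2 _ _ (by norm_num) (by norm_num))
    ((him _ _ (by norm_num) (by norm_num) le_rfl).const_mul 2),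
    intervalIntegral.integral_const_mul] at hA
  rw [hL, hR, hB] at hw
  linarith
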